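/- Fix an integer Q ≥ 2 and a real ρ ∈ (0,1). For a positive integer κ let N = κQ and n = ⌊ρN⌋. For the load profile chain {ξ(t)} on Ξ_{n,S,κ}, with t_N := ⌈(1/2)(1−ρ)ρ N log N⌉, one has lim_{α→∞} liminf_{N→∞} D_TV( t_N − ⌈αN⌉ ) = 1. -/

import Mathlib

/-! The lower bound comes from a single statistic, the centred load `f = ξ_v - n/Q` of one resource.
Writing `γ = N / (n (1 + N - n))`, one step of the chain satisfies exactly `P f = (1 - γ) f`
(`drift_one`), and `P f² ≤ (1 - 2γ) f² + 1` because `f` changes by at most one (`drift_two`).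
Iterating, `f` has mean `m = (1 - γ)^t f(ξ₀)` and variance at most `1/(2γ)` at time `t`
(`evolve_mean`, `evolve_second`). Under the stationary law, which is identified by detailed balance
(`detailed_balance`, `loadPi_stationary`), the second moment of `f` is at most `1/(2γ)`
(`stationary_second`). By Chebyshev's inequality the event `f > m/2` separates the two laws, so the
distance is at least `1 - 4/(γ m²)` (`tvDist_separation`, `DTV_lower`).

Starting from the greedy profile, `f(ξ₀)` is of order `N` (`exists_greedy`). Since
`1/γ = ρ(1-ρ)N + O(1)`, at time `t_N - ⌈αN⌉` one has `N (1 - γ)^(2t) ≥ exp α` for large `N`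
(`decay_bound`), hence `γ m²` is at least a constant times `exp α`, and the distance is at least
`1 - K exp(-α)` with `K` depending only on `Q` and `ρ`. -/

open scoped BigOperators
open Filter MeasureTheory

noncomputable section

namespace CongestionPaper

attribute [local instance 10] Classical.propDecidable

/-- Evolution of a distribution under a transition kernel `p` on a finite state space:
`evolve p mu t` is the law at time `t` of the Markov chain with transition matrix `p`
and initial distribution `mu`. -/
def evolve {X : Type*} [Fintype X] (p : X -> X -> Real) (mu : X -> Real) : Nat -> X -> Real
  | 0 => mu
  | (t+1) => fun y => ∑ x, evolve p mu t x * p x y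

/-- Point mass at `x0`. -/
def delta {X : Type*} (x0 : X) : X -> Real := fun x => if x = x0 then 1 else 0

/-- Total variation distance between two distributions on a finite type,
as the supremum over events `A` of the difference of probabilities of `A`. -/
def tvDist {X : Type*} [Fintype X] (mu nu : X -> Real) : Real :=
  ⨆ A : Finset X, |∑ x ∈ A, (mu x - nu x)|

/-- Total variation distance between the pushforwards of `mu` and `nu` under `m`. -/
def tvDistOn {X : Type*} [Fintype X] {Y : Type*} (m : X -> Y) (mu nu : X -> Real) : Real :=
  ⨆ B : Finset Y, |∑ x : X, (if m x ∈ B then mu x - nu x else 0)|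

/-- Worst-case (over the initial state) total variation distance to `pi` at time `t`. -/
def DTV {X : Type*} [Fintype X] (p : X -> X -> Real) (pi : X -> Real) (t : Nat) : Real :=
  ⨆ x0 : X, tvDist (evolve p (delta x0) t) pi

/-- Mixing time `T^mix(eps)`. -/
def Tmix {X : Type*} [Fintype X] (p : X -> X -> Real) (pi : X -> Real) (eps : Real) : Nat :=
  sInf {t : Nat | DTV p pi t ≤ eps}

/-- Probability of a given trajectory `w` of length `T` for the chain started at `x0`. -/
def pathProb {X : Type*} [Fintype X] (p : X -> X -> Real) (x0 : X) (T : Nat)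
    (w : Fin (T+1) -> X) : Real :=
  (if w 0 = x0 then 1 else 0) * ∏ t : Fin T, p (w t.castSucc) (w t.succ)

/-- Probability that some state visited up to time `T` satisfies `Bad`. -/
def hitProb {X : Type*} [Fintype X] (p : X -> X -> Real) (x0 : X) (T : Nat)
    (Bad : X -> Prop) : Real :=
  ∑ w : Fin (T+1) -> X, (if ∃ t, Bad (w t) then pathProb p x0 T w else 0)

/-! ### The load profile chain -/

/-- Load profiles: `xi : S -> {0,...,kappa}` with `∑ xi v = n`, where `S = Fin Q`. -/
abbrev LoadState (Q kap n : Nat) := {xi : Fin Q -> Fin (kap+1) // (∑ v, ((xi v : Nat))) = n}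

/-- Transition matrix of the load profile chain on `Xi_{n,S,kappa}`. -/
def loadP (Q kap n : Nat) (xi xi' : LoadState Q kap n) : Real :=
  if xi' = xi then
    (∑ v, ((xi.1 v : Nat) : Real) * (((1 + kap - (xi.1 v : Nat) : Nat)) : Real))
      / ((n : Real) * ((1 + kap * Q - n : Nat) : Real))
  else
    (∑ vm, ∑ vp,
      if vm ≠ vp ∧ (xi'.1 vm : Nat) + 1 = (xi.1 vm : Nat) ∧ (xi'.1 vp : Nat) = (xi.1 vp : Nat) + 1 ∧
          (∀ v, v ≠ vm -> v ≠ vp -> xi'.1 v = xi.1 v)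
        then ((xi.1 vm : Nat) : Real) * (((kap - (xi.1 vp : Nat) : Nat)) : Real) else 0)
      / ((n : Real) * ((1 + kap * Q - n : Nat) : Real))

/-- Stationary weight `∏_v 1/(xi_v! (kappa - xi_v)!)`. -/
def loadWeight (Q kap n : Nat) (xi : LoadState Q kap n) : Real :=
  ∏ v, (1 : Real) /
    ((Nat.factorial (xi.1 v : Nat) : Real) * (Nat.factorial (kap - (xi.1 v : Nat)) : Real))

/-- The stationary distribution `pi_n` of the load profile chain. -/
def loadPi (Q kap n : Nat) (xi : LoadState Q kap n) : Real :=
  loadWeight Q kap n xi / (∑ eta : LoadState Q kap n, loadWeight Q kap n eta)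

/-- `xi ∈ Xi(delta)`: the normalized load profile is within Euclidean distance `delta`
of the constant vector `(rho/Q)_v`. -/
def loadNear (Q kap n : Nat) (rho : Real) (xi : LoadState Q kap n) (del : Real) : Prop :=
  Real.sqrt (∑ v, (((xi.1 v : Nat) : Real) / ((kap * Q : Nat) : Real) - rho / (Q : Real))^2) ≤ del

/-- `D(xi, xi') = (1/2) ∑_v |xi_v - xi'_v|`. -/
def loadD (Q kap n : Nat) (xi xi' : LoadState Q kap n) : Real :=
  (1/2) * ∑ v, |((xi.1 v : Nat) : Real) - ((xi'.1 v : Nat) : Real)|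

/-! ### The congestion dynamics (Glauber dynamics) -/

/-- `xi_v(sigma)`: the number of players adopting resource `v`. -/
def xiCount {Q n : Nat} (sg : Fin n -> Fin Q) (v : Fin Q) : Nat :=
  (Finset.univ.filter fun i => sg i = v).card

/-- Configurations: `sigma : [n] -> S` with `xi_v(sigma) ≤ kappa` for every `v`. -/
abbrev ConfigState (Q kap n : Nat) := {sg : Fin n -> Fin Q // ∀ v, xiCount sg v ≤ kap}

/-- Transition matrix of the congestion dynamics. -/
def configP (Q kap n : Nat) (sg sg' : ConfigState Q kap n) : Real :=
  if sg' = sg then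
    (∑ i, ((1 + kap - xiCount sg.1 (sg.1 i) : Nat) : Real))
      / ((n : Real) * ((1 + kap * Q - n : Nat) : Real))
  else
    (∑ i, if sg'.1 i ≠ sg.1 i ∧ (∀ j, j ≠ i -> sg'.1 j = sg.1 j)
        then ((kap - xiCount sg.1 (sg'.1 i) : Nat) : Real) else 0)
      / ((n : Real) * ((1 + kap * Q - n : Nat) : Real))

/-- The potential `F(sigma) = ∑_v ∑_{s=0}^{xi_v(sigma)} (log(kappa+1) - log(kappa+1-s))`. -/
def potF (Q kap n : Nat) (sg : ConfigState Q kap n) : Real :=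
  ∑ v, ∑ s ∈ Finset.range (xiCount sg.1 v + 1),
    (Real.log ((kap : Real) + 1) - Real.log ((kap : Real) + 1 - (s : Real)))

/-- The Gibbs measure `mu_n(sigma) = e^{-F(sigma)}/Z_n`. -/
def gibbs (Q kap n : Nat) (sg : ConfigState Q kap n) : Real :=
  Real.exp (-(potF Q kap n sg)) / (∑ ta : ConfigState Q kap n, Real.exp (-(potF Q kap n ta)))

/-- `sigma ∈ S(delta)`. -/
def configNear (Q kap n : Nat) (rho : Real) (sg : ConfigState Q kap n) (del : Real) : Prop :=
  Real.sqrt (∑ v, ((xiCount sg.1 v : Real) / ((kap * Q : Nat) : Real) - rho / (Q : Real))^2) ≤ del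

/-- The load matrix `xi^{sigma0}_{u,v}(sigma)`. -/
def ximat {Q n : Nat} (sg0 sg : Fin n -> Fin Q) (u v : Fin Q) : Nat :=
  (Finset.univ.filter fun i => sg0 i = u ∧ sg i = v).card

/-- `sigma ∈ S(sigma0, delta)`: for each `u`, the normalized `u`-th row of the
load matrix is within Euclidean distance `delta` of the constant vector `(1/Q)_v`. -/
def configNearMat (Q kap n : Nat) (sg0 sg : ConfigState Q kap n) (del : Real) : Prop :=
  ∀ u, Real.sqrt
      (∑ v, ((ximat sg0.1 sg.1 u v : Real) / (xiCount sg0.1 u : Real) - 1 / (Q : Real))^2) ≤ del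

/-- `D^{sigma0}(sigma, sigma') = ∑_u (1/2) ∑_v |xi^{sigma0}_{u,v}(sigma) - xi^{sigma0}_{u,v}(sigma')|`. -/
def matD (Q kap n : Nat) (sg0 sg sg' : ConfigState Q kap n) : Real :=
  ∑ u, (1/2) * ∑ v, |(ximat sg0.1 sg.1 u v : Real) - (ximat sg0.1 sg'.1 u v : Real)|

/-- The constant `cStar = (sqrt Q/(1-rho) + rho/(2Q))^{1/2}`. -/
def cStar (Q : Nat) (rho : Real) : Real :=
  Real.sqrt (Real.sqrt (Q : Real) / (1 - rho) + rho / (2 * (Q : Real)))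

/-! ### The base-exchange chain on `B^(Q)(n)` -/

/-- `B^(Q)(n) = {x ∈ Z_{≥0}^Q : ∑ x_i = n}`. -/
abbrev BState (Q n : Nat) := {x : Fin Q -> Fin (n+1) // (∑ i, ((x i : Nat))) = n}

/-- Transition matrix of the base-exchange chain on `B^(Q)(n)`. -/
def baseP (Q n : Nat) (x y : BState Q n) : Real :=
  if y = x then
    ∑ i, (if 0 < (x.1 i : Nat) then (1 : Real) / ((Q : Real) * (Q : Real)) else (1 : Real) / (Q : Real))
  else
    ∑ i, ∑ j,
      if i ≠ j ∧ (y.1 i : Nat) + 1 = (x.1 i : Nat) ∧ (y.1 j : Nat) = (x.1 j : Nat) + 1 ∧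
          (∀ v, v ≠ i -> v ≠ j -> y.1 v = x.1 v)
        then (1 : Real) / ((Q : Real) * (Q : Real)) else 0

/-- The lazy version of the base-exchange chain. -/
def lazyBaseP (Q n : Nat) (x y : BState Q n) : Real :=
  (1/2) * (if y = x then 1 else 0) + (1/2) * baseP Q n x y

/-- The uniform distribution on `B^(Q)(n)`. -/
def unifB (Q n : Nat) (x : BState Q n) : Real := 1 / (Fintype.card (BState Q n) : Real)


/-! ### The transition operator -/

/-- One unit of load moves from resource `a` to a different resource `b`. -/
def Move {Q kap n : Nat} (xi xi' : LoadState Q kap n) (a b : Fin Q) : Prop :=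
  a ≠ b ∧ (xi'.1 a : Nat) + 1 = (xi.1 a : Nat) ∧ (xi'.1 b : Nat) = (xi.1 b : Nat) + 1 ∧
    (∀ v, v ≠ a -> v ≠ b -> xi'.1 v = xi.1 v)

lemma Move.symm {Q kap n : Nat} {xi xi' : LoadState Q kap n} {a b : Fin Q}
    (h : Move xi xi' a b) : Move xi' xi b a := by
  obtain ⟨h1, h2, h3, h4⟩ := h
  exact ⟨h1.symm, h3.symm, h2.symm, fun v hb ha => (h4 v ha hb).symm⟩

lemma Move.unique {Q kap n : Nat} {xi xi' xi'' : LoadState Q kap n} {a b : Fin Q}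
    (h : Move xi xi' a b) (h' : Move xi xi'' a b) : xi'' = xi' := by
  obtain ⟨h1, h2, h3, h4⟩ := h
  obtain ⟨k1, k2, k3, k4⟩ := h'
  apply Subtype.ext
  funext v
  by_cases ha : v = a
  · subst ha; apply Fin.ext; omega
  by_cases hb : v = b
  · subst hb; apply Fin.ext; omega
  rw [h4 v ha hb, k4 v ha hb]

lemma exists_move {Q kap n : Nat} (xi : LoadState Q kap n) {a b : Fin Q} (hab : a ≠ b)
    (ha : 0 < (xi.1 a : Nat)) (hb : (xi.1 b : Nat) < kap) : ∃ xi', Move xi xi' a b := by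
  set g : Fin Q → Fin (kap + 1) := fun v =>
    if v = a then ⟨(xi.1 a : Nat) - 1, by omega⟩
    else if v = b then ⟨(xi.1 b : Nat) + 1, by omega⟩ else xi.1 v with hg
  have hga : (g a : Nat) = (xi.1 a : Nat) - 1 := by simp [hg]
  have hgb : (g b : Nat) = (xi.1 b : Nat) + 1 := by simp [hg, hab.symm]
  have hgv : ∀ v, v ≠ a → v ≠ b → g v = xi.1 v := by
    intro v h1 h2; simp [hg, h1, h2]
  have hsum : ∑ v, ((g v : Nat) + if v = a then 1 else 0)
      = ∑ v, ((xi.1 v : Nat) + if v = b then 1 else 0) := by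
    apply Finset.sum_congr rfl
    intro v _
    by_cases h1 : v = a
    · subst h1; simp [hga, hab]; omega
    by_cases h2 : v = b
    · subst h2; simp [hgb, h1]
    simp [hgv v h1 h2, h1, h2]
  have hs : ∑ v, ((g v : Nat)) = n := by
    have := xi.2
    simp only [Finset.sum_add_distrib, Finset.sum_ite_eq', Finset.mem_univ, if_true] at hsum
    omega
  exact ⟨⟨g, hs⟩, hab, by simp only [hga]; omega, hgb, hgv⟩

lemma move_sum {Q kap n : Nat} (xi : LoadState Q kap n) {a b : Fin Q} (hab : a ≠ b)
    (F : LoadState Q kap n → ℝ) (c : ℝ) (hF : ∀ xi', Move xi xi' a b → F xi' = c) :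
    ∑ xi', (if Move xi xi' a b then
      ((xi.1 a : Nat) : ℝ) * ((kap - (xi.1 b : Nat) : Nat) : ℝ) else 0) * F xi'
      = ((xi.1 a : Nat) : ℝ) * ((kap - (xi.1 b : Nat) : Nat) : ℝ) * c := by
  by_cases ha : (xi.1 a : Nat) = 0
  · simp [ha]
  by_cases hb : kap - (xi.1 b : Nat) = 0
  · simp [hb]
  obtain ⟨y, hy⟩ := exists_move xi hab (Nat.pos_of_ne_zero ha) (by omega)
  rw [Finset.sum_eq_single y]
  · rw [if_pos hy, hF y hy]
  · intro z _ hz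
    rw [if_neg (fun h => hz (hy.unique h)), zero_mul]
  · simp

lemma loadP_eq {Q kap n : Nat} (xi xi' : LoadState Q kap n) :
    loadP Q kap n xi xi' =
      ((if xi' = xi then
          ∑ v, ((xi.1 v : Nat) : ℝ) * (((1 + kap - (xi.1 v : Nat) : Nat)) : ℝ) else 0)
        + ∑ a, ∑ b, if Move xi xi' a b then
            ((xi.1 a : Nat) : ℝ) * ((kap - (xi.1 b : Nat) : Nat) : ℝ) else 0)
      / ((n : ℝ) * ((1 + kap * Q - n : Nat) : ℝ)) := by
  unfold loadP
  by_cases h : xi' = xi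
  · have hno : ∀ a b, ¬ Move xi xi' a b := by
      rintro a b ⟨_, h2, _, _⟩
      rw [h] at h2; omega
    simp only [hno, if_pos h, if_false, Finset.sum_const_zero, add_zero]
  · rw [if_neg h, if_neg h, zero_add]
    congr 1
    refine Finset.sum_congr rfl fun a _ => Finset.sum_congr rfl fun b _ => ?_
    exact if_congr Iff.rfl rfl rfl

/-- The one-step expectation of `F`, where `G a b` is the value of `F` after a move from `a` to `b`.
The holding weight is `∑ ξ_a (1 + κ - ξ_a) = n + ∑ ξ_a (κ - ξ_a)`, whose second part supplies the
diagonal terms `a = b` of the double sum. -/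
lemma loadP_apply {Q kap n : Nat} (xi : LoadState Q kap n)
    (F : LoadState Q kap n → ℝ) (G : Fin Q → Fin Q → ℝ)
    (hG : ∀ a b xi', Move xi xi' a b → F xi' = G a b) (hGd : ∀ a, G a a = F xi) :
    ∑ xi', loadP Q kap n xi xi' * F xi' =
      ((n : ℝ) * F xi + ∑ a, ∑ b,
        ((xi.1 a : Nat) : ℝ) * ((kap : ℝ) - ((xi.1 b : Nat) : ℝ)) * G a b)
      / ((n : ℝ) * ((1 + kap * Q - n : Nat) : ℝ)) := by
  have hcast : ∀ b, ((kap - (xi.1 b : Nat) : Nat) : ℝ) = (kap : ℝ) - ((xi.1 b : Nat) : ℝ) :=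
    fun b => Nat.cast_sub (by omega)
  have hcast1 : ∀ b, ((1 + kap - (xi.1 b : Nat) : Nat) : ℝ)
      = 1 + (kap : ℝ) - ((xi.1 b : Nat) : ℝ) := by
    intro b; rw [Nat.cast_sub (by omega)]; push_cast; ring
  have hn : ∑ v, ((xi.1 v : Nat) : ℝ) = n := by exact_mod_cast xi.2
  have key : ∀ a b, ∑ xi', (if Move xi xi' a b then
      ((xi.1 a : Nat) : ℝ) * ((kap - (xi.1 b : Nat) : Nat) : ℝ) else 0) * F xi'
      = ((xi.1 a : Nat) : ℝ) * ((kap : ℝ) - ((xi.1 b : Nat) : ℝ)) * G a b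
        - if b = a then ((xi.1 a : Nat) : ℝ) * ((kap : ℝ) - ((xi.1 b : Nat) : ℝ)) * F xi
          else 0 := by
    intro a b
    by_cases hab : b = a
    · subst hab
      have : ∀ xi', ¬ Move xi xi' b b := fun xi' h => h.1 rfl
      simp [this, hGd]
    · rw [move_sum xi (Ne.symm hab) F _ (hG a b), if_neg hab, hcast, sub_zero]
  simp_rw [loadP_eq, div_mul_eq_mul_div]
  rw [← Finset.sum_div]
  congr 1
  simp_rw [add_mul, Finset.sum_mul]
  rw [Finset.sum_add_distrib]
  have h1 : ∑ xi', ∑ a, ∑ b, (if Move xi xi' a b then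
      ((xi.1 a : Nat) : ℝ) * ((kap - (xi.1 b : Nat) : Nat) : ℝ) else 0) * F xi'
      = ∑ a, ∑ b, ((xi.1 a : Nat) : ℝ) * ((kap : ℝ) - ((xi.1 b : Nat) : ℝ)) * G a b
        - ∑ a, ((xi.1 a : Nat) : ℝ) * ((kap : ℝ) - ((xi.1 a : Nat) : ℝ)) * F xi := by
    rw [Finset.sum_comm, ← Finset.sum_sub_distrib]
    apply Finset.sum_congr rfl
    intro a _
    rw [Finset.sum_comm]
    simp_rw [key]
    rw [Finset.sum_sub_distrib, Finset.sum_ite_eq']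
    simp
  rw [h1]
  simp only [ite_mul, zero_mul, Finset.sum_ite_eq', Finset.mem_univ, if_true]
  rw [← hn]
  simp_rw [hcast1, Finset.sum_mul]
  have : ∀ A B C D : ℝ, A - C = D → A + (B - C) = D + B := by intros; linarith
  apply this
  rw [← Finset.sum_sub_distrib]
  exact Finset.sum_congr rfl fun v _ => by ring

lemma loadP_nonneg {Q kap n : Nat} (xi xi' : LoadState Q kap n) : 0 ≤ loadP Q kap n xi xi' := by
  rw [loadP_eq]
  apply div_nonneg _ (by positivity)
  apply add_nonneg
  · split_ifs
    · positivity
    · exact le_rfl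
  · refine Finset.sum_nonneg fun a _ => Finset.sum_nonneg fun b _ => ?_
    split_ifs
    · positivity
    · exact le_rfl

section Drift

variable {Q kap n : Nat}

lemma weight_sum (xi : LoadState Q kap n) :
    ∑ b, ((kap : ℝ) - ((xi.1 b : Nat) : ℝ)) = kap * Q - n := by
  have hn : ∑ v, ((xi.1 v : Nat) : ℝ) = n := by exact_mod_cast xi.2
  rw [Finset.sum_sub_distrib, hn]; simp [mul_comm]

lemma loadP_row_sum (hn : 0 < n) (hnN : n ≤ kap * Q) (xi : LoadState Q kap n) :
    ∑ xi', loadP Q kap n xi xi' = 1 := by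
  have h := loadP_apply xi (fun _ => 1) (fun _ _ => 1) (fun _ _ _ _ => rfl) (fun _ => rfl)
  have hs : ∑ v, ((xi.1 v : Nat) : ℝ) = n := by exact_mod_cast xi.2
  simp only [mul_one, ← Finset.mul_sum, weight_sum, ← Finset.sum_mul, hs] at h
  rw [h]
  have hM : (((1 + kap * Q - n : Nat)) : ℝ) = 1 + kap * Q - n := by
    rw [Nat.cast_sub (by omega)]; push_cast; ring
  have hM' : (0 : ℝ) < ((1 + kap * Q - n : Nat) : ℝ) := by
    exact_mod_cast (by omega : 0 < 1 + kap * Q - n)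
  rw [div_eq_one_iff_eq (by positivity), hM]; ring

/-- The relaxation rate `γ = N / (n (1 + N - n))`. -/
def rate (Q kap n : Nat) : ℝ :=
  ((kap * Q : Nat) : ℝ) / ((n : ℝ) * ((1 + kap * Q - n : Nat) : ℝ))

/-- The centred load `ξ_v - n/Q`. -/
def cload {Q kap n : Nat} (v : Fin Q) (xi : LoadState Q kap n) : ℝ :=
  ((xi.1 v : Nat) : ℝ) - (n : ℝ) / Q

lemma move_cload {xi xi' : LoadState Q kap n} {a b : Fin Q} (v : Fin Q) (h : Move xi xi' a b) :
    cload v xi' = cload v xi + ((if b = v then 1 else 0) - (if a = v then 1 else 0)) := by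
  obtain ⟨h1, h2, h3, h4⟩ := h
  unfold cload
  by_cases ha : a = v
  · subst ha
    have : ((xi.1 a : Nat) : ℝ) = ((xi'.1 a : Nat) : ℝ) + 1 := by exact_mod_cast h2.symm
    simp [this, h1.symm]; ring
  by_cases hb : b = v
  · subst hb
    have : ((xi'.1 b : Nat) : ℝ) = ((xi.1 b : Nat) : ℝ) + 1 := by exact_mod_cast h3
    simp [this, h1]; ring
  simp [ha, hb, h4 v (Ne.symm ha) (Ne.symm hb)]

/-- The total weighted displacement of coordinate `v`, over all `(a, b)`. -/
lemma weighted_disp (hQ : 0 < Q) (v : Fin Q) (xi : LoadState Q kap n) :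
    ∑ a, ∑ b, ((xi.1 a : Nat) : ℝ) * ((kap : ℝ) - ((xi.1 b : Nat) : ℝ)) *
        ((if b = v then 1 else 0) - (if a = v then 1 else 0))
      = - (((kap * Q : Nat) : ℝ) * cload v xi) := by
  have hs : ∑ v, ((xi.1 v : Nat) : ℝ) = n := by exact_mod_cast xi.2
  simp_rw [mul_sub (_ * _), Finset.sum_sub_distrib]
  simp only [mul_ite, mul_one, mul_zero, Finset.sum_ite_eq', Finset.mem_univ, if_true]
  rw [← Finset.sum_mul, hs, Finset.sum_comm]
  simp only [Finset.sum_ite_eq', Finset.mem_univ, if_true]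
  rw [← Finset.mul_sum, weight_sum]
  unfold cload
  have : (Q : ℝ) ≠ 0 := by positivity
  push_cast
  field_simp
  ring

lemma drift_one (hQ : 0 < Q) (hn : 0 < n) (hnN : n ≤ kap * Q) (v : Fin Q)
    (xi : LoadState Q kap n) :
    ∑ xi', loadP Q kap n xi xi' * cload v xi' = (1 - rate Q kap n) * cload v xi := by
  rw [loadP_apply xi (cload v)
    (fun a b => cload v xi + ((if b = v then 1 else 0) - (if a = v then 1 else 0)))
    (fun a b xi' h => move_cload v h) (fun a => by simp)]
  have hs : ∑ v, ((xi.1 v : Nat) : ℝ) = n := by exact_mod_cast xi.2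
  have hM : (((1 + kap * Q - n : Nat)) : ℝ) = 1 + kap * Q - n := by
    rw [Nat.cast_sub (by omega)]; push_cast; ring
  have hM' : (0 : ℝ) < ((1 + kap * Q - n : Nat) : ℝ) := by
    exact_mod_cast (by omega : 0 < 1 + kap * Q - n)
  simp_rw [mul_add _ (cload v xi), Finset.sum_add_distrib]
  rw [weighted_disp hQ]
  simp_rw [← Finset.sum_mul, ← Finset.mul_sum, weight_sum, ← Finset.sum_mul, hs]
  unfold rate
  have hn' : (0 : ℝ) < n := by exact_mod_cast hn
  rw [div_eq_iff (by positivity)]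
  have e : (1 - ((kap * Q : Nat) : ℝ) / ((n : ℝ) * ((1 + kap * Q - n : Nat) : ℝ))) * cload v xi
      * ((n : ℝ) * ((1 + kap * Q - n : Nat) : ℝ))
      = cload v xi * ((n : ℝ) * ((1 + kap * Q - n : Nat) : ℝ))
        - ((kap * Q : Nat) : ℝ) * cload v xi := by
    field_simp
  rw [e, hM]
  ring

/-- The increments are at most one in absolute value, which gives the additive constant `1`. -/
lemma drift_two (hQ : 0 < Q) (hn : 0 < n) (hnN : n ≤ kap * Q) (v : Fin Q)
    (xi : LoadState Q kap n) :
    ∑ xi', loadP Q kap n xi xi' * cload v xi' ^ 2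
      ≤ (1 - 2 * rate Q kap n) * cload v xi ^ 2 + 1 := by
  rw [loadP_apply xi (fun y => cload v y ^ 2)
    (fun a b => (cload v xi + ((if b = v then 1 else 0) - (if a = v then 1 else 0))) ^ 2)
    (fun a b xi' h => by rw [move_cload v h]) (fun a => by simp)]
  have hs : ∑ v, ((xi.1 v : Nat) : ℝ) = n := by exact_mod_cast xi.2
  have hM : (((1 + kap * Q - n : Nat)) : ℝ) = 1 + kap * Q - n := by
    rw [Nat.cast_sub (by omega)]; push_cast; ring
  have hM' : (0 : ℝ) < ((1 + kap * Q - n : Nat) : ℝ) := by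
    exact_mod_cast (by omega : 0 < 1 + kap * Q - n)
  have hn' : (0 : ℝ) < n := by exact_mod_cast hn
  set f := cload v xi with hf
  have hle : ∑ a, ∑ b, ((xi.1 a : Nat) : ℝ) * ((kap : ℝ) - ((xi.1 b : Nat) : ℝ)) *
        (f + ((if b = v then 1 else 0) - (if a = v then 1 else 0))) ^ 2
      ≤ ∑ a, ∑ b, (((xi.1 a : Nat) : ℝ) * ((kap : ℝ) - ((xi.1 b : Nat) : ℝ)) * (f ^ 2 + 1)
        + 2 * f * (((xi.1 a : Nat) : ℝ) * ((kap : ℝ) - ((xi.1 b : Nat) : ℝ)) *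
          ((if b = v then 1 else 0) - (if a = v then 1 else 0)))) := by
    refine Finset.sum_le_sum fun a _ => Finset.sum_le_sum fun b _ => ?_
    have hb : (0 : ℝ) ≤ (kap : ℝ) - ((xi.1 b : Nat) : ℝ) := by
      have : ((xi.1 b : Nat) : ℝ) ≤ kap := by exact_mod_cast Nat.lt_succ_iff.mp (xi.1 b).2
      linarith
    have hw : (0 : ℝ) ≤ ((xi.1 a : Nat) : ℝ) * ((kap : ℝ) - ((xi.1 b : Nat) : ℝ)) := by positivity
    have hd : (((if b = v then 1 else 0) - (if a = v then 1 else 0)) : ℝ) ^ 2 ≤ 1 := by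
      split_ifs <;> norm_num
    nlinarith [mul_le_mul_of_nonneg_left hd hw]
  simp_rw [Finset.sum_add_distrib, ← Finset.mul_sum] at hle
  simp_rw [Finset.mul_sum] at hle
  have h2 : ∑ a, ∑ b, 2 * f * (((xi.1 a : Nat) : ℝ) * ((kap : ℝ) - ((xi.1 b : Nat) : ℝ)) *
          ((if b = v then 1 else 0) - (if a = v then 1 else 0))) = 2 * f * - (((kap * Q : Nat) : ℝ) * f) := by
    rw [hf, ← weighted_disp hQ]; simp_rw [Finset.mul_sum]
  rw [h2] at hle
  simp_rw [← Finset.sum_mul, ← Finset.mul_sum, weight_sum, ← Finset.sum_mul, hs] at hle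
  unfold rate
  rw [div_le_iff₀ (by positivity)]
  have e : ((1 - 2 * (((kap * Q : Nat) : ℝ) / ((n : ℝ) * ((1 + kap * Q - n : Nat) : ℝ)))) * f ^ 2 + 1)
      * ((n : ℝ) * ((1 + kap * Q - n : Nat) : ℝ))
      = (f ^ 2 + 1) * ((n : ℝ) * ((1 + kap * Q - n : Nat) : ℝ)) - 2 * ((kap * Q : Nat) : ℝ) * f ^ 2 := by
    field_simp
    ring
  rw [e, hM]
  nlinarith [hle, hn']

end Drift

/-! ### Reversibility -/

lemma loadWeight_pos {Q kap n : Nat} (xi : LoadState Q kap n) : 0 < loadWeight Q kap n xi := by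
  unfold loadWeight
  exact Finset.prod_pos fun v _ => by positivity

lemma move_balance {Q kap n : Nat} {xi xi' : LoadState Q kap n} {a b : Fin Q}
    (h : Move xi xi' a b) :
    loadWeight Q kap n xi * (((xi.1 a : Nat) : ℝ) * ((kap - (xi.1 b : Nat) : Nat) : ℝ))
      = loadWeight Q kap n xi' * (((xi'.1 b : Nat) : ℝ) * ((kap - (xi'.1 a : Nat) : Nat) : ℝ)) := by
  obtain ⟨hab, h2, h3, h4⟩ := h
  unfold loadWeight
  have hb : b ∈ Finset.univ.erase a := by simp [hab.symm]
  rw [← Finset.mul_prod_erase _ _ (Finset.mem_univ a), ← Finset.mul_prod_erase _ _ hb,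
    ← Finset.mul_prod_erase _ _ (Finset.mem_univ a), ← Finset.mul_prod_erase _ _ hb]
  have hrest : ∏ v ∈ (Finset.univ.erase a).erase b, (1 : ℝ) /
      ((Nat.factorial (xi'.1 v : Nat) : ℝ) * (Nat.factorial (kap - (xi'.1 v : Nat)) : ℝ))
      = ∏ v ∈ (Finset.univ.erase a).erase b, (1 : ℝ) /
      ((Nat.factorial (xi.1 v : Nat) : ℝ) * (Nat.factorial (kap - (xi.1 v : Nat)) : ℝ)) := by
    apply Finset.prod_congr rfl
    intro v hv
    simp only [Finset.mem_erase] at hv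
    rw [h4 v hv.2.1 hv.1]
  rw [hrest]
  generalize ∏ v ∈ (Finset.univ.erase a).erase b, (1 : ℝ) /
      ((Nat.factorial (xi.1 v : Nat) : ℝ) * (Nat.factorial (kap - (xi.1 v : Nat)) : ℝ)) = R
  have ha' := (xi.1 a).2
  have hb' := (xi'.1 b).2
  rw [← h2, h3]
  obtain ⟨p, hp⟩ : ∃ p, kap - (xi'.1 a : Nat) = p + 1 := ⟨kap - (xi'.1 a : Nat) - 1, by omega⟩
  obtain ⟨q, hq⟩ : ∃ q, kap - (xi.1 b : Nat) = q + 1 := ⟨kap - (xi.1 b : Nat) - 1, by omega⟩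
  have hp' : kap - ((xi'.1 a : Nat) + 1) = p := by omega
  have hq' : kap - ((xi.1 b : Nat) + 1) = q := by omega
  rw [hp, hq, hp', hq']
  simp only [Nat.factorial_succ]
  have f1 := Nat.cast_ne_zero (R := ℝ) |>.mpr (Nat.factorial_ne_zero (xi'.1 a : Nat))
  have f2 := Nat.cast_ne_zero (R := ℝ) |>.mpr (Nat.factorial_ne_zero (xi.1 b : Nat))
  have f3 := Nat.cast_ne_zero (R := ℝ) |>.mpr (Nat.factorial_ne_zero p)
  have f4 := Nat.cast_ne_zero (R := ℝ) |>.mpr (Nat.factorial_ne_zero q)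
  push_cast
  have g1 : ((xi'.1 a : Nat) : ℝ) + 1 ≠ 0 := by positivity
  have g2 : ((xi.1 b : Nat) : ℝ) + 1 ≠ 0 := by positivity
  have g3 : (p : ℝ) + 1 ≠ 0 := by positivity
  have g4 : (q : ℝ) + 1 ≠ 0 := by positivity
  field_simp

lemma detailed_balance {Q kap n : Nat} (xi xi' : LoadState Q kap n) :
    loadWeight Q kap n xi * loadP Q kap n xi xi'
      = loadWeight Q kap n xi' * loadP Q kap n xi' xi := by
  by_cases h : xi' = xi
  · rw [h]
  rw [loadP_eq, loadP_eq, if_neg h, if_neg (Ne.symm h), zero_add, zero_add,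
    ← mul_div_assoc, ← mul_div_assoc]
  congr 1
  simp_rw [Finset.mul_sum]
  rw [Finset.sum_comm]
  refine Finset.sum_congr rfl fun b _ => Finset.sum_congr rfl fun a _ => ?_
  by_cases hm : Move xi xi' a b
  · rw [if_pos hm, if_pos hm.symm, move_balance hm]
  · rw [if_neg hm, if_neg (fun h => hm h.symm), mul_zero, mul_zero]

lemma loadPi_nonneg {Q kap n : Nat} (xi : LoadState Q kap n) : 0 ≤ loadPi Q kap n xi :=
  div_nonneg (loadWeight_pos xi).le (Finset.sum_nonneg fun eta _ => (loadWeight_pos eta).le)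

lemma loadPi_sum {Q kap n : Nat} (x0 : LoadState Q kap n) : ∑ xi, loadPi Q kap n xi = 1 := by
  unfold loadPi
  rw [← Finset.sum_div]
  apply div_self
  exact (Finset.sum_pos (fun eta _ => loadWeight_pos eta) ⟨x0, Finset.mem_univ _⟩).ne'

lemma loadPi_stationary {Q kap n : Nat} (hn : 0 < n) (hnN : n ≤ kap * Q)
    (y : LoadState Q kap n) : ∑ xi, loadPi Q kap n xi * loadP Q kap n xi y = loadPi Q kap n y := by
  unfold loadPi
  simp_rw [div_mul_eq_mul_div, detailed_balance _ y]
  rw [← Finset.sum_div, ← Finset.mul_sum, loadP_row_sum hn hnN, mul_one]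

/-! ### Moments of the chain and of its stationary law -/

section Evolve

variable {X : Type*} [Fintype X] {p : X → X → ℝ} {mu : X → ℝ}

lemma evolve_nonneg (hp : ∀ x y, 0 ≤ p x y) (hmu : ∀ x, 0 ≤ mu x) (t : ℕ) (x : X) :
    0 ≤ evolve p mu t x := by
  induction t generalizing x with
  | zero => exact hmu x
  | succ t ih => exact Finset.sum_nonneg fun y _ => mul_nonneg (ih y) (hp y x)

/-- The forward law integrates `g` as the previous law integrates the one-step expectation. -/
lemma evolve_succ_apply (t : ℕ) (g : X → ℝ) :
    ∑ y, evolve p mu (t + 1) y * g y = ∑ x, evolve p mu t x * ∑ y, p x y * g y := by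
  simp only [evolve, Finset.sum_mul, Finset.mul_sum, mul_assoc]
  rw [Finset.sum_comm]

lemma evolve_sum (hp : ∀ x, ∑ y, p x y = 1) (hmu : ∑ x, mu x = 1) (t : ℕ) :
    ∑ x, evolve p mu t x = 1 := by
  induction t with
  | zero => exact hmu
  | succ t ih =>
    have := evolve_succ_apply (p := p) (mu := mu) t (fun _ => 1)
    simpa [hp, ih] using this

lemma evolve_mean {f : X → ℝ} {g : ℝ} (hf : ∀ x, ∑ y, p x y * f y = (1 - g) * f x) (t : ℕ) :
    ∑ x, evolve p mu t x * f x = (1 - g) ^ t * ∑ x, mu x * f x := by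
  induction t with
  | zero => simp [evolve]
  | succ t ih =>
    rw [evolve_succ_apply]
    simp_rw [hf, mul_left_comm _ (1 - g)]
    rw [← Finset.mul_sum, ih]; ring

/-- The contraction `P f² ≤ (1 - 2γ) f² + 1` keeps the second moment within `1/(2γ)` of the
squared mean. -/
lemma evolve_second (hp : ∀ x y, 0 ≤ p x y) (hp1 : ∀ x, ∑ y, p x y = 1)
    (hmu : ∀ x, 0 ≤ mu x) (hmu1 : ∑ x, mu x = 1)
    {f : X → ℝ} {g : ℝ} (hg : 0 < g) (hg2 : 2 * g ≤ 1)
    (hf : ∀ x, ∑ y, p x y * f y ^ 2 ≤ (1 - 2 * g) * f x ^ 2 + 1) (t : ℕ) :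
    ∑ x, evolve p mu t x * f x ^ 2
      ≤ ((1 - g) ^ t) ^ 2 * ∑ x, mu x * f x ^ 2 + 1 / (2 * g) := by
  have hM : 0 ≤ ∑ x, mu x * f x ^ 2 :=
    Finset.sum_nonneg fun x _ => mul_nonneg (hmu x) (sq_nonneg _)
  have h1 : ∑ x, evolve p mu t x * f x ^ 2
      ≤ (1 - 2 * g) ^ t * ∑ x, mu x * f x ^ 2 + 1 / (2 * g) := by
    induction t with
    | zero => simp [evolve]; positivity
    | succ t ih =>
      rw [evolve_succ_apply]
      calc ∑ x, evolve p mu t x * ∑ y, p x y * f y ^ 2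
          ≤ ∑ x, evolve p mu t x * ((1 - 2 * g) * f x ^ 2 + 1) :=
            Finset.sum_le_sum fun x _ =>
              mul_le_mul_of_nonneg_left (hf x) (evolve_nonneg hp hmu t x)
        _ = (1 - 2 * g) * ∑ x, evolve p mu t x * f x ^ 2 + 1 := by
            simp_rw [mul_add, mul_one, Finset.sum_add_distrib, evolve_sum hp1 hmu1 t,
              mul_left_comm _ (1 - 2 * g)]
            rw [← Finset.mul_sum]
        _ ≤ (1 - 2 * g) * ((1 - 2 * g) ^ t * ∑ x, mu x * f x ^ 2 + 1 / (2 * g)) + 1 := by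
            gcongr
        _ = (1 - 2 * g) ^ (t + 1) * ∑ x, mu x * f x ^ 2 + 1 / (2 * g) := by
            field_simp
            ring
  have h2 : (1 - 2 * g) ^ t ≤ ((1 - g) ^ t) ^ 2 := by
    rw [← pow_mul, mul_comm t 2, pow_mul]
    apply pow_le_pow_left₀ (by linarith)
    nlinarith
  nlinarith [mul_le_mul_of_nonneg_right h2 hM]

lemma stationary_second {pi : X → ℝ} (hpi : ∀ x, 0 ≤ pi x) (hpi1 : ∑ x, pi x = 1)
    (hst : ∀ y, ∑ x, pi x * p x y = pi y) {f : X → ℝ} {g : ℝ} (hg : 0 < g)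
    (hf : ∀ x, ∑ y, p x y * f y ^ 2 ≤ (1 - 2 * g) * f x ^ 2 + 1) :
    ∑ x, pi x * f x ^ 2 ≤ 1 / (2 * g) := by
  have h : ∑ x, pi x * f x ^ 2 ≤ (1 - 2 * g) * ∑ x, pi x * f x ^ 2 + 1 := by
    calc ∑ y, pi y * f y ^ 2 = ∑ y, (∑ x, pi x * p x y) * f y ^ 2 := by simp_rw [hst]
      _ = ∑ x, pi x * ∑ y, p x y * f y ^ 2 := by
          simp only [Finset.sum_mul, Finset.mul_sum, mul_assoc]
          rw [Finset.sum_comm]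
      _ ≤ ∑ x, pi x * ((1 - 2 * g) * f x ^ 2 + 1) :=
          Finset.sum_le_sum fun x _ => mul_le_mul_of_nonneg_left (hf x) (hpi x)
      _ = _ := by
          simp_rw [mul_add, mul_one, Finset.sum_add_distrib, hpi1, mul_left_comm _ (1 - 2 * g)]
          rw [← Finset.mul_sum]
  rw [le_div_iff₀ (by positivity)]
  linarith

/-! ### Total variation -/

lemma le_tvDist (mu nu : X → ℝ) (A : Finset X) : ∑ x ∈ A, (mu x - nu x) ≤ tvDist mu nu :=
  (le_abs_self _).trans
    (le_ciSup (f := fun A : Finset X => |∑ x ∈ A, (mu x - nu x)|) (Set.finite_range _).bddAbove A)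

lemma tvDist_le_one {mu nu : X → ℝ} (hmu : ∀ x, 0 ≤ mu x) (hmu1 : ∑ x, mu x = 1)
    (hnu : ∀ x, 0 ≤ nu x) (hnu1 : ∑ x, nu x = 1) : tvDist mu nu ≤ 1 := by
  apply ciSup_le
  intro A
  have h1 : 0 ≤ ∑ x ∈ A, mu x := Finset.sum_nonneg fun x _ => hmu x
  have h2 : 0 ≤ ∑ x ∈ A, nu x := Finset.sum_nonneg fun x _ => hnu x
  have h3 : ∑ x ∈ A, mu x ≤ 1 :=
    hmu1 ▸ Finset.sum_le_sum_of_subset_of_nonneg (Finset.subset_univ A) fun x _ _ => hmu x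
  have h4 : ∑ x ∈ A, nu x ≤ 1 :=
    hnu1 ▸ Finset.sum_le_sum_of_subset_of_nonneg (Finset.subset_univ A) fun x _ _ => hnu x
  rw [Finset.sum_sub_distrib, abs_le]
  constructor <;> linarith

/-- If `f` has mean `m` and variance at most `V` under `mu`, and second moment at most `V` under
`nu`, then Chebyshev's inequality shows that the event `f > m/2` separates the two laws. -/
lemma tvDist_separation {mu nu : X → ℝ} (hmu : ∀ x, 0 ≤ mu x) (hmu1 : ∑ x, mu x = 1)
    (hnu : ∀ x, 0 ≤ nu x) {f : X → ℝ} {m V : ℝ} (hm : 0 < m)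
    (hmean : ∑ x, mu x * f x = m) (hsec : ∑ x, mu x * f x ^ 2 ≤ m ^ 2 + V)
    (hsec' : ∑ x, nu x * f x ^ 2 ≤ V) : 1 - 8 * V / m ^ 2 ≤ tvDist mu nu := by
  set A : Finset X := Finset.univ.filter fun x => m / 2 < f x with hA
  refine le_trans ?_ (le_tvDist mu nu A)
  have hsplit : ∑ x ∈ A, mu x + ∑ x ∈ Finset.univ.filter (fun x => ¬ m / 2 < f x), mu x = 1 := by
    rw [← hmu1, hA, Finset.sum_filter_add_sum_filter_not]
  have hvar : ∑ x, mu x * (f x - m) ^ 2 ≤ V := by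
    have : ∑ x, mu x * (f x - m) ^ 2
        = ∑ x, mu x * f x ^ 2 - 2 * m * ∑ x, mu x * f x + m ^ 2 * ∑ x, mu x := by
      simp_rw [Finset.mul_sum]
      rw [← Finset.sum_sub_distrib, ← Finset.sum_add_distrib]
      exact Finset.sum_congr rfl fun x _ => by ring
    rw [this, hmean, hmu1]; linarith
  have hc1 : (m / 2) ^ 2 * ∑ x ∈ Finset.univ.filter (fun x => ¬ m / 2 < f x), mu x ≤ V := by
    refine le_trans ?_ hvar
    rw [Finset.mul_sum]
    refine le_trans (Finset.sum_le_sum (g := fun x => mu x * (f x - m) ^ 2) fun x hx => ?_)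
      (Finset.sum_le_sum_of_subset_of_nonneg (Finset.subset_univ _)
        fun x _ _ => mul_nonneg (hmu x) (sq_nonneg _))
    have hx' : f x ≤ m / 2 := by simpa using hx
    rw [mul_comm]
    exact mul_le_mul_of_nonneg_left (by nlinarith) (hmu x)
  have hc2 : (m / 2) ^ 2 * ∑ x ∈ A, nu x ≤ V := by
    refine le_trans ?_ hsec'
    rw [Finset.mul_sum]
    refine le_trans (Finset.sum_le_sum (g := fun x => nu x * f x ^ 2) fun x hx => ?_)
      (Finset.sum_le_sum_of_subset_of_nonneg (Finset.subset_univ _)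
        fun x _ _ => mul_nonneg (hnu x) (sq_nonneg _))
    have hx' : m / 2 < f x := by simpa [hA] using hx
    rw [mul_comm]
    exact mul_le_mul_of_nonneg_left (by nlinarith) (hnu x)
  rw [Finset.sum_sub_distrib]
  have h8 : 8 * V / m ^ 2 = V / (m / 2) ^ 2 + V / (m / 2) ^ 2 := by field_simp; ring
  rw [mul_comm, ← le_div_iff₀ (by positivity)] at hc1 hc2
  linarith

lemma delta_sum_mul (x0 : X) (g : X → ℝ) : ∑ x, delta x0 x * g x = g x0 := by
  simp [delta]

lemma delta_nonneg {Y : Type*} (x0 x : Y) : 0 ≤ delta x0 x := by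
  unfold delta; split_ifs <;> norm_num

lemma delta_sum (x0 : X) : ∑ x, delta x0 x = 1 := by
  simpa using delta_sum_mul x0 (fun _ => 1)

end Evolve

lemma DTV_le_one {Q kap n : Nat} (hn : 0 < n) (hnN : n ≤ kap * Q) (x0 : LoadState Q kap n)
    (t : ℕ) : DTV (loadP Q kap n) (loadPi Q kap n) t ≤ 1 := by
  have : Nonempty (LoadState Q kap n) := ⟨x0⟩
  exact ciSup_le fun x => tvDist_le_one (evolve_nonneg loadP_nonneg (delta_nonneg x) t)
    (evolve_sum (loadP_row_sum hn hnN) (delta_sum x) t) loadPi_nonneg (loadPi_sum x0)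

lemma DTV_lower {Q kap n : Nat} (hQ : 0 < Q) (hn : 0 < n) (hnN : n ≤ kap * Q)
    (hg : 0 < rate Q kap n) (hg2 : 2 * rate Q kap n ≤ 1)
    (v : Fin Q) (x0 : LoadState Q kap n) (h0 : 0 < cload v x0) (t : ℕ) :
    1 - 4 / (rate Q kap n * ((1 - rate Q kap n) ^ t * cload v x0) ^ 2)
      ≤ DTV (loadP Q kap n) (loadPi Q kap n) t := by
  have hm : 0 < (1 - rate Q kap n) ^ t * cload v x0 :=
    mul_pos (pow_pos (by linarith) t) h0
  have h := tvDist_separation (mu := evolve (loadP Q kap n) (delta x0) t) (nu := loadPi Q kap n)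
    (f := cload v) (V := 1 / (2 * rate Q kap n))
    (evolve_nonneg loadP_nonneg (delta_nonneg x0) t)
    (evolve_sum (loadP_row_sum hn hnN) (delta_sum x0) t) loadPi_nonneg hm
    (by rw [evolve_mean (drift_one hQ hn hnN v), delta_sum_mul])
    (by
      have := evolve_second loadP_nonneg (loadP_row_sum hn hnN) (delta_nonneg x0)
        (delta_sum x0) hg hg2 (drift_two hQ hn hnN v) t
      rw [delta_sum_mul] at this
      rw [mul_pow]; exact this)
    (stationary_second loadPi_nonneg (loadPi_sum x0) (loadPi_stationary hn hnN) hg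
      (drift_two hQ hn hnN v))
  have e : 8 * (1 / (2 * rate Q kap n)) / ((1 - rate Q kap n) ^ t * cload v x0) ^ 2
      = 4 / (rate Q kap n * ((1 - rate Q kap n) ^ t * cload v x0) ^ 2) := by
    field_simp
    ring
  rw [e] at h
  exact h.trans (le_ciSup (f := fun x => tvDist (evolve (loadP Q kap n) (delta x) t)
    (loadPi Q kap n)) (Set.finite_range _).bddAbove x0)

/-! ### An initial state concentrated on one resource -/

lemma sum_range_min (kap n Q : Nat) :
    ∑ i ∈ Finset.range Q, min kap (n - i * kap) = min (Q * kap) n := by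
  induction Q with
  | zero => simp
  | succ k ih =>
    rw [Finset.sum_range_succ, ih, Nat.succ_mul]
    omega

/-- Filling the resources greedily puts `min κ n` units on the first one. -/
lemma exists_greedy {Q kap n : Nat} (hQ : 0 < Q) (hnN : n ≤ kap * Q) :
    ∃ x0 : LoadState Q kap n, (x0.1 ⟨0, hQ⟩ : Nat) = min kap n := by
  refine ⟨⟨fun v => ⟨min kap (n - v * kap), by omega⟩, ?_⟩, by simp⟩
  simp only
  rw [Fin.sum_univ_eq_sum_range (fun i => min kap (n - i * kap)) Q, sum_range_min,
    min_eq_right (by rwa [mul_comm])]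

/-! ### Asymptotics -/

/-- At time `t ≈ (1/2) r x log x - al x`, a mean decaying at rate `g ≈ 1/(r x)` still has square
at least `exp al / x` times its initial value squared. -/
lemma decay_bound {g x r al : ℝ} {t : ℕ} (hx : 0 < x) (hr : r ≤ 1) (hrx : 3 ≤ r * x)
    (hg : g * (r * x - 1) ≤ 1) (hal : 0 < al)
    (ht : 2 * (t : ℝ) ≤ r * x * Real.log x + 2 - 2 * al * x)
    (hbig : 2 + 2 * Real.log x ≤ al * x) :
    Real.exp al ≤ x * ((1 - g) ^ t) ^ 2 := by
  set L := r * x - 2 with hL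
  have hLpos : 0 < L := by linarith
  have h1 : Real.exp (-(1 / L)) ≤ 1 - g := by
    have e1 : 1 / L + 1 ≤ Real.exp (1 / L) := Real.add_one_le_exp _
    have e2 : g ≤ 1 / (L + 1) := by
      rw [le_div_iff₀ (by linarith)]
      have : L + 1 = r * x - 1 := by rw [hL]; ring
      rw [this]; exact hg
    have e3 : Real.exp (-(1 / L)) ≤ (1 / L + 1)⁻¹ := by
      rw [Real.exp_neg]
      exact inv_anti₀ (by positivity) e1
    have e4 : (1 / L + 1)⁻¹ = 1 - 1 / (L + 1) := by
      field_simp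
      ring
    linarith
  have h2 : Real.exp (-(2 * t / L)) ≤ ((1 - g) ^ t) ^ 2 := by
    have : Real.exp (-(2 * t / L)) = (Real.exp (-(1 / L)) ^ t) ^ 2 := by
      rw [← pow_mul, ← Real.exp_nat_mul]
      congr 1
      push_cast
      ring
    rw [this]
    gcongr
  have h3 : al ≤ Real.log x - 2 * t / L := by
    have : 2 * t / L ≤ Real.log x - al := by
      rw [div_le_iff₀ hLpos]
      refine ht.trans ?_
      have : r * (al * x) ≤ 1 * (al * x) := mul_le_mul_of_nonneg_right hr (by positivity)
      rw [hL]
      nlinarith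
    linarith
  calc Real.exp al ≤ Real.exp (Real.log x - 2 * t / L) := Real.exp_le_exp.mpr h3
    _ = x * Real.exp (-(2 * t / L)) := by rw [sub_eq_add_neg, Real.exp_add, Real.exp_log hx]
    _ ≤ x * ((1 - g) ^ t) ^ 2 := by gcongr

lemma two_mul_time_le {y z : ℝ} (hz : 0 ≤ z) (hyz : z ≤ y) :
    2 * ((⌈y⌉₊ - ⌈z⌉₊ : ℕ) : ℝ) ≤ 2 * y + 2 - 2 * z := by
  rw [Nat.cast_sub (Nat.ceil_mono hyz)]
  have h1 := Nat.ceil_lt_add_one (hz.trans hyz)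
  have h2 := Nat.le_ceil z
  linarith

/-- The lower bound on the distance (and the trivial upper bound), under explicit largeness conditions on `N = κ Q`. -/
lemma DTV_bounds {Q : Nat} (hQ : 2 ≤ Q) {rho : ℝ} (hrho0 : 0 < rho) (hrho1 : rho < 1)
    {al : ℝ} (hal : 0 < al) {kap : ℕ} {x : ℝ} (hx : x = ((kap * Q : Nat) : ℝ)) (hx1 : 1 ≤ x)
    (hrx : 3 ≤ (1 - rho) * rho * x) (hbig : 2 + 2 * Real.log x ≤ al * x)
    (hlog : 2 * al ≤ (1 - rho) * rho * Real.log x) :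
    1 - 8 / (min ((1 - rho) / Q) (rho / 4)) ^ 2 * Real.exp (-al) ≤
      DTV (loadP Q kap ⌊rho * x⌋₊) (loadPi Q kap ⌊rho * x⌋₊)
        (⌈(1/2) * (1 - rho) * rho * x * Real.log x⌉₊ - ⌈al * x⌉₊) ∧
    DTV (loadP Q kap ⌊rho * x⌋₊) (loadPi Q kap ⌊rho * x⌋₊)
        (⌈(1/2) * (1 - rho) * rho * x * Real.log x⌉₊ - ⌈al * x⌉₊) ≤ 1 := by
  have hQ0 : 0 < Q := by omega
  have hQr : (2 : ℝ) ≤ Q := by exact_mod_cast hQ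
  have hx0 : 0 < x := by linarith
  set n := ⌊rho * x⌋₊ with hn_def
  set t := ⌈(1/2) * (1 - rho) * rho * x * Real.log x⌉₊ - ⌈al * x⌉₊ with ht_def
  have hn_le : (n : ℝ) ≤ rho * x := Nat.floor_le (by positivity)
  have hn_ge : rho * x - 1 < n := by
    have := Nat.lt_floor_add_one (rho * x); rw [← hn_def] at this; linarith
  have hr0 : 0 < (1 - rho) * rho := mul_pos (by linarith) hrho0
  have hrhox : 3 ≤ rho * x := by nlinarith [mul_pos hrho0 hx0]
  have hnx : (n : ℝ) ≤ x := by nlinarith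
  have hnN : n ≤ kap * Q := by rw [hx] at hnx; exact_mod_cast hnx
  have hnr : (0 : ℝ) < n := by linarith
  have hn : 0 < n := by exact_mod_cast hnr
  have hM : (((1 + kap * Q - n : Nat)) : ℝ) = 1 + x - n := by
    rw [Nat.cast_sub (by omega), hx]; push_cast; ring
  have hrate : rate Q kap n = x / (n * (1 + x - n)) := by
    unfold rate; rw [hM, hx]
  have hMpos : 0 < 1 + x - n := by linarith
  have hnM : ((1 - rho) * rho * x - 1) * x ≤ n * (1 + x - n) := by
    have h1 : (1 - rho) * x ≤ 1 + x - n := by linarith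
    have h2 : (rho * x - 1) * ((1 - rho) * x) ≤ n * (1 + x - n) :=
      mul_le_mul hn_ge.le h1 (mul_nonneg (by linarith) hx0.le) hnr.le
    nlinarith [mul_pos hrho0 hx0]
  have hg : 0 < rate Q kap n := by rw [hrate]; positivity
  have hg1 : rate Q kap n * ((1 - rho) * rho * x - 1) ≤ 1 := by
    rw [hrate, div_mul_eq_mul_div, div_le_one (by positivity), mul_comm]; exact hnM
  have hg2 : 2 * rate Q kap n ≤ 1 := by
    nlinarith
  have hglow : 1 / (2 * x) ≤ rate Q kap n := by
    rw [hrate, div_le_div_iff₀ (by positivity) (by positivity)]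
    have : (n : ℝ) * (1 + x - n) ≤ x * (2 * x) :=
      mul_le_mul hnx (by linarith) hMpos.le hx0.le
    linarith
  obtain ⟨x0, hx0'⟩ := exists_greedy (n := n) hQ0 hnN
  refine ⟨?_, DTV_le_one hn hnN x0 t⟩
  set c := min ((1 - rho) / Q) (rho / 4) with hc
  have hcpos : 0 < c := lt_min (div_pos (by linarith) (by linarith)) (by linarith)
  have hcl : c * x ≤ cload ⟨0, hQ0⟩ x0 := by
    unfold cload
    rw [hx0', Nat.cast_min]
    rcases le_total (kap : ℝ) (n : ℝ) with h | h
    · rw [min_eq_left h]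
      have hk : (kap : ℝ) = x / Q := by rw [hx]; push_cast; field_simp
      rw [hk, ← sub_div]
      calc c * x ≤ (1 - rho) / Q * x := by gcongr; exact min_le_left _ _
        _ = ((1 - rho) * x) / Q := by ring
        _ ≤ (x - n) / Q := by gcongr; linarith
    · rw [min_eq_right h]
      have h1 : (n : ℝ) / Q ≤ n / 2 := by gcongr
      have h2 : c * x ≤ rho / 4 * x := by gcongr; exact min_le_right _ _
      linarith
  have h0 : 0 < cload ⟨0, hQ0⟩ x0 := lt_of_lt_of_le (by positivity) hcl
  refine le_trans ?_ (DTV_lower hQ0 hn hnN hg hg2 ⟨0, hQ0⟩ x0 h0 t)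
  have hdec : Real.exp al ≤ x * ((1 - rate Q kap n) ^ t) ^ 2 := by
    refine decay_bound (r := (1 - rho) * rho) hx0 (by nlinarith) hrx hg1 hal ?_ hbig
    have := two_mul_time_le (y := (1/2) * (1 - rho) * rho * x * Real.log x) (z := al * x)
      (by positivity) (by nlinarith)
    rw [← ht_def] at this
    linarith
  have hden : c ^ 2 * Real.exp al / 2
      ≤ rate Q kap n * ((1 - rate Q kap n) ^ t * cload ⟨0, hQ0⟩ x0) ^ 2 := by
    calc c ^ 2 * Real.exp al / 2
        ≤ c ^ 2 * (x * ((1 - rate Q kap n) ^ t) ^ 2) / 2 := by gcongr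
      _ = 1 / (2 * x) * ((1 - rate Q kap n) ^ t * (c * x)) ^ 2 := by field_simp
      _ ≤ _ := by
        have : 0 ≤ 1 - rate Q kap n := by linarith
        gcongr
  have : 4 / (rate Q kap n * ((1 - rate Q kap n) ^ t * cload ⟨0, hQ0⟩ x0) ^ 2)
      ≤ 8 / c ^ 2 * Real.exp (-al) := by
    calc _ ≤ 4 / (c ^ 2 * Real.exp al / 2) := by gcongr
      _ = 8 / c ^ 2 * Real.exp (-al) := by rw [Real.exp_neg]; field_simp; norm_num
  linarith

/-- lower bound for the load profile chain (Theorem 2.6):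
`lim_{alpha→∞} liminf_{N→∞} D_TV(t_N - ⌈alpha N⌉) = 1`. -/
theorem statement7 (Q : Nat) (hQ : 2 ≤ Q) (rho : Real) (hrho0 : 0 < rho) (hrho1 : rho < 1) :
    Filter.Tendsto (fun al : Real =>
        Filter.liminf (fun kap : Nat =>
            DTV (loadP Q kap (⌊rho * ((kap * Q : Nat) : Real)⌋₊))
              (loadPi Q kap (⌊rho * ((kap * Q : Nat) : Real)⌋₊))
              (⌈(1/2) * (1 - rho) * rho * ((kap * Q : Nat) : Real)
                  * Real.log ((kap * Q : Nat) : Real)⌉₊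
                - ⌈al * ((kap * Q : Nat) : Real)⌉₊))
          Filter.atTop)
      Filter.atTop (nhds 1) := by
  set K : ℝ := 8 / (min ((1 - rho) / Q) (rho / 4)) ^ 2 with hK
  have hr0 : 0 < (1 - rho) * rho := mul_pos (by linarith) hrho0
  have hxt : Tendsto (fun kap : ℕ => ((kap * Q : Nat) : ℝ)) atTop atTop :=
    tendsto_natCast_atTop_atTop.comp
      (Filter.tendsto_atTop_mono (fun k => Nat.le_mul_of_pos_right k (by omega)) tendsto_id)
  have hlower : Tendsto (fun al : ℝ => 1 - K * Real.exp (-al)) atTop (nhds 1) := by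
    have h := (Real.tendsto_exp_neg_atTop_nhds_zero.const_mul K).const_sub 1
    simpa using h
  have hev : ∀ al : ℝ, 0 < al → ∀ᶠ kap : ℕ in atTop,
      1 - K * Real.exp (-al) ≤ DTV (loadP Q kap (⌊rho * ((kap * Q : Nat) : Real)⌋₊))
              (loadPi Q kap (⌊rho * ((kap * Q : Nat) : Real)⌋₊))
              (⌈(1/2) * (1 - rho) * rho * ((kap * Q : Nat) : Real)
                  * Real.log ((kap * Q : Nat) : Real)⌉₊
                - ⌈al * ((kap * Q : Nat) : Real)⌉₊) ∧
      DTV (loadP Q kap (⌊rho * ((kap * Q : Nat) : Real)⌋₊))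
              (loadPi Q kap (⌊rho * ((kap * Q : Nat) : Real)⌋₊))
              (⌈(1/2) * (1 - rho) * rho * ((kap * Q : Nat) : Real)
                  * Real.log ((kap * Q : Nat) : Real)⌉₊
                - ⌈al * ((kap * Q : Nat) : Real)⌉₊) ≤ 1 := by
    intro al hal
    have e1 : ∀ᶠ x : ℝ in atTop, 1 ≤ x := eventually_ge_atTop 1
    have e2 : ∀ᶠ x : ℝ in atTop, 3 ≤ (1 - rho) * rho * x :=
      (tendsto_id.const_mul_atTop hr0).eventually_ge_atTop 3
    have e3 : ∀ᶠ x : ℝ in atTop, 2 + 2 * Real.log x ≤ al * x := by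
      have hlo := Real.isLittleO_log_id_atTop.bound (show (0 : ℝ) < al / 4 by positivity)
      have hc : ∀ᶠ x : ℝ in atTop, 4 ≤ al * x :=
        (tendsto_id.const_mul_atTop hal).eventually_ge_atTop 4
      filter_upwards [hlo, hc, e1] with x h1 h2 h3
      have h4 : Real.log x ≤ al / 4 * x := by
        have := (le_abs_self _).trans h1
        rwa [id, Real.norm_eq_abs, abs_of_nonneg (by linarith : (0 : ℝ) ≤ x)] at this
      linarith
    have e4 : ∀ᶠ x : ℝ in atTop, 2 * al ≤ (1 - rho) * rho * Real.log x :=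
      (Real.tendsto_log_atTop.const_mul_atTop hr0).eventually_ge_atTop _
    filter_upwards [hxt.eventually e1, hxt.eventually e2, hxt.eventually e3,
      hxt.eventually e4] with kap h1 h2 h3 h4
    exact DTV_bounds hQ hrho0 hrho1 hal rfl h1 h2 h3 h4
  refine tendsto_of_tendsto_of_tendsto_of_le_of_le' hlower tendsto_const_nhds ?_ ?_
  · filter_upwards [eventually_gt_atTop (0 : ℝ)] with al hal
    refine le_liminf_of_le ?_ ((hev al hal).mono fun _ h => h.1)
    exact IsBoundedUnder.isCoboundedUnder_ge ⟨1, (hev al hal).mono fun _ h => h.2⟩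
  · filter_upwards [eventually_gt_atTop (0 : ℝ)] with al hal
    refine liminf_le_of_frequently_le ((hev al hal).mono fun _ h => h.2).frequently ?_
    exact ⟨_, (hev al hal).mono fun _ h => h.1⟩

end CongestionPaper
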